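/- Let G = (V,E) be a finite simple graph with n vertices and m edges having a dominating clique K of order k = |K| ≥ 3, with m ≥ 3(n−k) − 2 + k(k−1)/2. Then there exists a bijective labelling f : E → {1,2,…,m} such that: (i) for any two distinct vertices v, v' ∈ V \ K, |σ(v) − σ(v')| ≥ 3, where σ(x) = Σ_{y : xy ∈ E} f(xy); and (ii) there is an ordering u_1, u_2, …, u_k of the vertices of K such that σ(u_{i+1}) − σ(u_i) ≥ k − 2 for every 1 ≤ i ≤ k − 1. -/

import Mathlib

open Finset

/-!
Write `H` for the graph `G` without the edges inside `K`. The smallest labels, `1, …, |E(H)|`, go to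
`H` and the largest to the edges inside `K`, so (i) only concerns the labelling of `H`.

For (i) with gap `t`, each `v ∉ K` owns an edge to `K`, on no other vertex outside `K`. Reserve the
labels `1, t + 1, 2t + 1, …` for the owned edges, label the other edges of `H` arbitrarily, and hand
out the reserved labels in the order of the partial sums obtained so far.

For (ii), rank the vertices of `K` by their sums in `H` and label the edges inside `K` in the order
of the total rank of their endpoints. If `x` ranks below `y`, then `xw` gets a smaller label than
`yw` for each of the `k - 2` other vertices `w` of `K`.
-/

section Bijections

variable {α β γ : Type*}

theorem exists_bijOn_union {s s' : Set α} {t t' : Set β} {f g : α → β} (hf : Set.BijOn f s t)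
    (hg : Set.BijOn g s' t') (hs : Disjoint s s') (ht : Disjoint t t') :
    ∃ h : α → β, Set.BijOn h (s ∪ s') (t ∪ t') ∧ Set.EqOn h f s ∧ Set.EqOn h g s' := by
  classical
  have eqOn_left : Set.EqOn (s.piecewise f g) f s := s.piecewise_eqOn f g
  have eqOn_right : Set.EqOn (s.piecewise f g) g s' :=
    (s.piecewise_eqOn_compl f g).mono hs.subset_compl_left
  have bij_left := hf.congr eqOn_left.symm
  have bij_right := hg.congr eqOn_right.symm
  refine ⟨s.piecewise f g, bij_left.union bij_right ?_, eqOn_left, eqOn_right⟩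
  exact (Set.injOn_union hs).2 ⟨bij_left.injOn, bij_right.injOn, fun a ha b hb =>
    ht.ne_of_mem (bij_left.mapsTo ha) (bij_right.mapsTo hb)⟩

theorem exists_bijOn_image_of_injOn [Nonempty γ] {s : Set α} {t : Set γ} {f : α → β} {r : α → γ}
    (hf : Set.InjOn f s) (hr : Set.BijOn r s t) :
    ∃ h : β → γ, Set.BijOn h (f '' s) t ∧ ∀ a ∈ s, h (f a) = r a := by
  let h : β → γ :=
    Function.extend (s.domRestrict f) (s.domRestrict r) fun _ => Classical.arbitrary γ
  have h_apply : ∀ a ∈ s, h (f a) = r a := fun a ha =>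
    hf.injective.extend_apply (s.domRestrict r) _ ⟨a, ha⟩
  exact ⟨h, (Set.bijOn_comp_iff hf).1 (hr.congr fun a ha => (h_apply a ha).symm), h_apply⟩

theorem exists_injective_fin_of_bijOn_Iio {s : Finset α} {r : α → ℕ} {n : ℕ}
    (hr : Set.BijOn r s (Set.Iio n)) :
    ∃ u : Fin n → α, Function.Injective u ∧ (∀ i, u i ∈ s) ∧ ∀ i, r (u i) = i := by
  choose u hu hru using fun i : Fin n => hr.surjOn i.isLt
  exact ⟨u, fun i j hij => Fin.ext (by rw [← hru i, ← hru j, hij]), hu, hru⟩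

end Bijections

section Ranking

variable {α β : Type*} [LinearOrder β]

/-- `r` numbers the elements of `s` by `0, …, #s - 1` in the order of increasing `φ`, ties being
broken arbitrarily. The values of `r` outside `s` are irrelevant. -/
structure IsRanking (s : Finset α) (φ : α → β) (r : α → ℕ) : Prop where
  bijOn : Set.BijOn r s (Set.Iio #s)
  le_of_lt : ∀ a ∈ s, ∀ b ∈ s, r a < r b → φ a ≤ φ b

theorem exists_isRanking (s : Finset α) (φ : α → β) : ∃ r, IsRanking s φ r := by
  let order : Fin #s ≃ s := (Tuple.sort fun i => φ (s.equivFin.symm i)).trans s.equivFin.symm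
  have order_mono : Monotone fun i => φ (order i) :=
    Tuple.monotone_sort fun i => φ (s.equivFin.symm i)
  classical
  let r : α → ℕ := fun a => if ha : a ∈ s then order.symm ⟨a, ha⟩ else 0
  have r_apply : ∀ a (ha : a ∈ s), r a = order.symm ⟨a, ha⟩ := fun a ha => dif_pos ha
  have r_order : ∀ i, r (order i) = i := fun i => by simp [r_apply _ (order i).2]
  refine ⟨r, ⟨fun a ha => ?_, fun a ha b hb hab => ?_, fun i hi => ?_⟩, fun a ha b hb hab => ?_⟩
  · rw [r_apply a ha]
    exact (order.symm ⟨a, ha⟩).isLt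
  · rw [r_apply a ha, r_apply b hb, Fin.val_inj, order.symm.injective.eq_iff] at hab
    exact congrArg Subtype.val hab
  · exact ⟨order ⟨i, hi⟩, (order ⟨i, hi⟩).2, r_order ⟨i, hi⟩⟩
  · rw [r_apply a ha, r_apply b hb] at hab
    simpa using order_mono (Fin.lt_def.2 hab).le

theorem IsRanking.lt_of_lt {s : Finset α} {φ : α → β} {r : α → ℕ} (hr : IsRanking s φ r) {a b : α}
    (ha : a ∈ s) (hb : b ∈ s) (hab : φ a < φ b) : r a < r b := by
  refine lt_of_le_of_ne (not_lt.1 fun hba => hab.not_ge (hr.le_of_lt b hb a ha hba)) fun h => ?_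
  exact hab.ne (congrArg φ (hr.bijOn.injOn ha hb h))

theorem IsRanking.pairwise_le_abs_sub {s : Finset α} {φ r : α → ℕ} (hr : IsRanking s φ r) (t : ℕ) :
    (s : Set α).Pairwise fun a b =>
      (t : ℤ) ≤ |((φ a + (t * r a + 1) : ℕ) : ℤ) - ((φ b + (t * r b + 1) : ℕ) : ℤ)| := by
  have gap : ∀ a ∈ s, ∀ b ∈ s, r a < r b → φ a + (t * r a + 1) + t ≤ φ b + (t * r b + 1) := by
    intro a ha b hb hab
    have hφ : φ a ≤ φ b := hr.le_of_lt a ha b hb hab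
    have hlabel : t * (r a + 1) ≤ t * r b := Nat.mul_le_mul_left t hab
    linarith
  intro a ha b hb hne
  rcases lt_or_gt_of_ne (hr.bijOn.injOn.ne ha hb hne) with hab | hba
  · have := gap a ha b hb hab
    exact le_abs.2 (.inr (by omega))
  · have := gap b hb a ha hba
    exact le_abs.2 (.inl (by omega))

end Ranking

section PrivateRepresentatives

/-- The arithmetic progression `1, t + 1, …, (p - 1) * t + 1` of the labels kept for the private
representatives. -/
def progression (t p : ℕ) : Finset ℕ :=
  (range p).image fun i => t * i + 1

theorem injective_mul_add_one {t : ℕ} (ht : 0 < t) : Function.Injective fun i => t * i + 1 :=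
  fun _ _ hij => Nat.eq_of_mul_eq_mul_left ht (Nat.succ_injective hij)

theorem card_progression {t : ℕ} (ht : 0 < t) (p : ℕ) : #(progression t p) = p := by
  rw [progression, card_image_of_injective _ (injective_mul_add_one ht), card_range]

theorem bijOn_progression {t : ℕ} (ht : 0 < t) (p : ℕ) :
    Set.BijOn (fun i => t * i + 1) (Set.Iio p) (progression t p) := by
  simpa [progression] using (injective_mul_add_one ht).injOn.bijOn_image (s := Set.Iio p)

theorem progression_subset_Icc {t p m : ℕ} (h : t * p < m + t) : progression t p ⊆ Icc 1 m := by
  simp only [progression, image_subset_iff, mem_range, mem_Icc]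
  intro i hi
  have : t * (i + 1) ≤ t * p := Nat.mul_le_mul_left t hi
  exact ⟨Nat.le_add_left 1 _, by linarith⟩

theorem exists_bijOn_sdiff_progression {α : Type*} [DecidableEq α] {s d : Finset α} {t : ℕ}
    (hd : d ⊆ s) (ht : 0 < t) (hcard : t * #d < #s + t) :
    ∃ g : α → ℕ, Set.BijOn g ↑(s \ d) ↑(Icc 1 #s \ progression t #d) := by
  refine (s \ d).finite_toSet.exists_bijOn_of_encard_eq ?_
  rw [Set.encard_coe_eq_coe_finsetCard, Set.encard_coe_eq_coe_finsetCard, card_sdiff_of_subset hd,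
    card_sdiff_of_subset (progression_subset_Icc hcard), card_progression ht, Nat.card_Icc,
    Nat.add_sub_cancel]

theorem exists_bijOn_Icc_pairwise_le_abs_sub_sum {ι α : Type*} {s : Finset ι} {E : Finset α}
    {I : ι → Finset α} {rep : ι → α} {t : ℕ} (ht : 0 < t) (hcard : t * #s < #E + t)
    (hIE : ∀ v ∈ s, I v ⊆ E) (hrep : ∀ v ∈ s, rep v ∈ I v)
    (hprivate : ∀ v ∈ s, ∀ w ∈ s, rep w ∈ I v → w = v) :
    ∃ f : α → ℕ, Set.BijOn f E (Icc 1 #E) ∧ (s : Set ι).Pairwise fun v w =>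
      (t : ℤ) ≤ |((∑ e ∈ I v, f e : ℕ) : ℤ) - ((∑ e ∈ I w, f e : ℕ) : ℤ)| := by
  classical
  have rep_injOn : Set.InjOn rep s := fun v hv w hw h => hprivate w hw v hv (h ▸ hrep w hw)
  have reps_subset : s.image rep ⊆ E := image_subset_iff.2 fun v hv => hIE v hv (hrep v hv)
  have card_reps : #(s.image rep) = #s := card_image_of_injOn rep_injOn
  obtain ⟨g, hg⟩ := exists_bijOn_sdiff_progression reps_subset ht (by rwa [card_reps])
  rw [card_reps] at hg
  obtain ⟨r, hr⟩ := exists_isRanking s fun v => ∑ e ∈ (I v).erase (rep v), g e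
  obtain ⟨h, hh, h_rep⟩ :=
    exists_bijOn_image_of_injOn rep_injOn ((bijOn_progression ht #s).comp hr.bijOn)
  rw [← coe_image] at hh
  obtain ⟨f, hf, f_eq_g, f_eq_h⟩ := exists_bijOn_union hg hh
    (disjoint_coe.2 sdiff_disjoint) (disjoint_coe.2 sdiff_disjoint)
  rw [← coe_union, ← coe_union, sdiff_union_of_subset reps_subset,
    sdiff_union_of_subset (progression_subset_Icc hcard)] at hf
  have sum_eq : ∀ v ∈ s,
      ∑ e ∈ I v, f e = ∑ e ∈ (I v).erase (rep v), g e + (t * r v + 1) := by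
    intro v hv
    rw [← sum_erase_add _ _ (hrep v hv), f_eq_h (mem_image_of_mem rep hv), h_rep v hv,
      Function.comp_apply]
    refine congrArg (· + _) (sum_congr rfl fun e he => f_eq_g ?_)
    obtain ⟨e_ne, e_mem⟩ := mem_erase.1 he
    refine mem_sdiff.2 ⟨hIE v hv e_mem, fun e_rep => e_ne ?_⟩
    obtain ⟨w, hw, rfl⟩ := mem_image.1 e_rep
    rw [hprivate v hv w hw e_mem]
  refine ⟨f, hf, fun v hv w hw hne => ?_⟩
  simp only [sum_eq v hv, sum_eq w hw]
  exact hr.pairwise_le_abs_sub t hv hw hne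

end PrivateRepresentatives

section Labelling

variable {V : Type*} [Fintype V] (G : SimpleGraph V) [DecidableRel G.Adj]

/-- The sum `σ(v)` of the labels of the edges at `v`. Labels are given on all of `Sym2 V`, but only
those on edges of `G` count. -/
def vertexSum (f : Sym2 V → ℕ) (v : V) : ℕ :=
  ∑ w ∈ G.neighborFinset v, f s(v, w)

/-- `f` labels the edges of `G` bijectively by `1, …, m`; its values on non-edges are arbitrary. -/
def IsEdgeLabelling (f : Sym2 V → ℕ) : Prop :=
  Set.BijOn f G.edgeFinset (Icc 1 #G.edgeFinset)

variable {G}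

theorem vertexSum_congr {f g : Sym2 V → ℕ} (h : Set.EqOn f g G.edgeFinset) (v : V) :
    vertexSum G f v = vertexSum G g v :=
  sum_congr rfl fun w hw => h (by simpa using hw)

theorem vertexSum_eq_sum_incidenceFinset [DecidableEq V] (f : Sym2 V → ℕ) (v : V) :
    vertexSum G f v = ∑ e ∈ G.incidenceFinset v, f e := by
  have incidence_eq : G.incidenceFinset v = (G.neighborFinset v).image fun w => s(v, w) := by
    ext e
    induction e with | _ a b => ?_
    simp only [SimpleGraph.mem_incidenceFinset, SimpleGraph.mk'_mem_incidenceSet_iff, mem_image,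
      SimpleGraph.mem_neighborFinset, Sym2.eq_iff]
    grind [SimpleGraph.adj_comm]
  rw [incidence_eq, sum_image fun w _ w' _ h => Sym2.congr_right.1 h, vertexSum]

theorem exists_isEdgeLabelling_deleteEdges_extension [DecidableEq V] {s : Finset (Sym2 V)}
    {g c : Sym2 V → ℕ} (hg : IsEdgeLabelling (G.deleteEdges s) g)
    (hc : Set.BijOn c ↑(G.edgeFinset ∩ s) (Ioc #(G.deleteEdges s).edgeFinset
      (#(G.deleteEdges s).edgeFinset + #(G.edgeFinset ∩ s)))) :
    ∃ f, IsEdgeLabelling G f ∧ Set.EqOn f g (G.deleteEdges s).edgeFinset ∧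
      Set.EqOn f c ↑(G.edgeFinset ∩ s) := by
  unfold IsEdgeLabelling at hg ⊢
  rw [SimpleGraph.edgeFinset_deleteEdges] at hg hc ⊢
  have labels_disjoint : Disjoint (Icc 1 #(G.edgeFinset \ s))
      (Ioc #(G.edgeFinset \ s) (#(G.edgeFinset \ s) + #(G.edgeFinset ∩ s))) := by
    simp only [disjoint_left, mem_Icc, mem_Ioc]
    omega
  have labels_union : Icc 1 #(G.edgeFinset \ s) ∪
      Ioc #(G.edgeFinset \ s) (#(G.edgeFinset \ s) + #(G.edgeFinset ∩ s)) =
        Icc 1 #G.edgeFinset := by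
    rw [← card_sdiff_add_card_inter G.edgeFinset s]
    ext i
    simp only [mem_union, mem_Icc, mem_Ioc]
    omega
  have extension := exists_bijOn_union hg hc (disjoint_coe.2 (disjoint_sdiff_inter _ _))
    (disjoint_coe.2 labels_disjoint)
  rwa [← coe_union, ← coe_union, sdiff_union_inter, labels_union] at extension

theorem exists_isEdgeLabelling_pairwise_le_abs_sub {S : Finset V} {t : ℕ} (ht : 0 < t)
    (hcard : t * #S < #G.edgeFinset + t) (hdom : ∀ v ∈ S, ∃ u ∉ S, G.Adj v u) :
    ∃ f, IsEdgeLabelling G f ∧ (S : Set V).Pairwise fun v w =>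
      (t : ℤ) ≤ |(vertexSum G f v : ℤ) - (vertexSum G f w : ℤ)| := by
  classical
  choose! d hdS hdG using hdom
  simp_rw [vertexSum_eq_sum_incidenceFinset]
  refine exists_bijOn_Icc_pairwise_le_abs_sub_sum (rep := fun v => s(v, d v)) ht hcard
    (fun v _ => G.incidenceFinset_subset v) (fun v hv => by simpa using hdG v hv) ?_
  intro v hv w hw h
  rw [SimpleGraph.mem_incidenceFinset, SimpleGraph.mk'_mem_incidenceSet_iff] at h
  exact (h.2.resolve_right fun h => hdS w hw (h ▸ hv)).symm

end Labelling

section Clique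

variable {V : Type*}

theorem exists_bijOn_Ioc_of_vertex_rank (C : Finset (Sym2 V)) (ρ : V → ℕ) (M : ℕ) :
    ∃ c : Sym2 V → ℕ, Set.BijOn c C (Ioc M (M + #C)) ∧
      ∀ x y w, s(x, w) ∈ C → s(y, w) ∈ C → ρ x < ρ y → c s(x, w) < c s(y, w) := by
  let rankSum : Sym2 V → ℕ := Sym2.lift ⟨fun a b => ρ a + ρ b, fun a b => add_comm _ _⟩
  obtain ⟨r, hr⟩ := exists_isRanking C rankSum
  have shift : Set.BijOn (fun i => M + 1 + i) (Set.Iio #C) (Ioc M (M + #C)) := by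
    refine ⟨fun i hi => ?_, (add_right_injective _).injOn, fun j hj => ⟨j - (M + 1), ?_, ?_⟩⟩ <;>
      grind
  refine ⟨fun e => M + 1 + r e, shift.comp hr.bijOn, fun x y w hx hy hxy => ?_⟩
  exact Nat.add_lt_add_left (hr.lt_of_lt hx hy (Nat.add_lt_add_right hxy (ρ w))) _

variable [DecidableEq V]

theorem sum_erase_add_card_le {K : Finset V} {f : Sym2 V → ℕ} {x y : V} (hx : x ∈ K) (hy : y ∈ K)
    (hne : x ≠ y) (hlt : ∀ w ∈ K, w ≠ x → w ≠ y → f s(x, w) < f s(y, w)) :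
    ∑ w ∈ K.erase x, f s(x, w) + #K ≤ ∑ w ∈ K.erase y, f s(y, w) + 2 := by
  have hyx : y ∈ K.erase x := mem_erase.2 ⟨hne.symm, hy⟩
  have hxy : x ∈ K.erase y := mem_erase.2 ⟨hne, hx⟩
  have card_others : #((K.erase x).erase y) + 2 = #K := by
    rw [← card_erase_add_one hx, ← card_erase_add_one hyx]
  have sum_others : ∑ w ∈ (K.erase x).erase y, f s(x, w) + #((K.erase x).erase y) ≤
      ∑ w ∈ (K.erase x).erase y, f s(y, w) := by
    rw [card_eq_sum_ones, ← sum_add_distrib]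
    refine sum_le_sum fun w hw => ?_
    obtain ⟨hwy, hwx, hwK⟩ := by simpa only [mem_erase] using hw
    exact hlt w hwK hwx hwy
  rw [← sum_erase_add _ _ hyx, ← sum_erase_add _ _ hxy, Sym2.eq_swap (a := y) (b := x),
    erase_right_comm (a := y) (b := x)]
  omega

variable [Fintype V] {G : SimpleGraph V} [DecidableRel G.Adj] {K : Finset V}

theorem card_edgeFinset_inter_sym2 (hK : G.IsClique ↑K) :
    #(G.edgeFinset ∩ K.sym2) = (#K).choose 2 := by
  rw [← Sym2.card_image_offDiag]
  congr 1
  ext e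
  induction e with | _ a b => ?_
  simp only [mem_inter, SimpleGraph.mem_edgeFinset, SimpleGraph.mem_edgeSet, mk_mem_sym2_iff,
    mem_image, mem_offDiag, Prod.exists, Function.uncurry_apply_pair, Sym2.eq_iff]
  constructor
  · rintro ⟨hab, ha, hb⟩
    exact ⟨a, b, ⟨ha, hb, hab.ne⟩, .inl ⟨rfl, rfl⟩⟩
  · rintro ⟨x, y, ⟨hx, hy, hxy⟩, ⟨rfl, rfl⟩ | ⟨rfl, rfl⟩⟩
    · exact ⟨hK hx hy hxy, hx, hy⟩
    · exact ⟨hK hy hx hxy.symm, hy, hx⟩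

theorem vertexSum_deleteEdges_of_notMem {v : V} (hv : v ∉ K) (f : Sym2 V → ℕ) :
    vertexSum (G.deleteEdges K.sym2) f v = vertexSum G f v := by
  refine sum_congr ?_ fun _ _ => rfl
  ext w
  simp [hv]

theorem vertexSum_eq_vertexSum_deleteEdges_add (hK : G.IsClique ↑K) {x : V} (hx : x ∈ K)
    (f : Sym2 V → ℕ) :
    vertexSum G f x = vertexSum (G.deleteEdges K.sym2) f x + ∑ w ∈ K.erase x, f s(x, w) := by
  have inner : K.erase x ⊆ G.neighborFinset x := fun w hw => by
    obtain ⟨hwx, hwK⟩ := mem_erase.1 hw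
    simpa using hK hx hwK hwx.symm
  have outer : (G.deleteEdges K.sym2).neighborFinset x = G.neighborFinset x \ K.erase x := by
    ext w
    simp only [SimpleGraph.mem_neighborFinset, SimpleGraph.deleteEdges_adj, mem_coe,
      mk_mem_sym2_iff, mem_sdiff, mem_erase]
    grind [SimpleGraph.Adj.ne]
  rw [vertexSum, vertexSum, outer, sum_sdiff inner]

theorem vertexSum_add_card_le (hK : G.IsClique ↑K) {f : Sym2 V → ℕ} {x y : V} (hx : x ∈ K)
    (hy : y ∈ K) (hne : x ≠ y)
    (houter : vertexSum (G.deleteEdges K.sym2) f x ≤ vertexSum (G.deleteEdges K.sym2) f y)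
    (hinner : ∀ w ∈ K, w ≠ x → w ≠ y → f s(x, w) < f s(y, w)) :
    vertexSum G f x + #K ≤ vertexSum G f y + 2 := by
  have := sum_erase_add_card_le hx hy hne hinner
  rw [vertexSum_eq_vertexSum_deleteEdges_add hK hx, vertexSum_eq_vertexSum_deleteEdges_add hK hy]
  omega

theorem exists_isEdgeLabelling_extending_of_isClique (hK : G.IsClique ↑K) {g : Sym2 V → ℕ}
    (hg : IsEdgeLabelling (G.deleteEdges K.sym2) g) :
    ∃ f, IsEdgeLabelling G f ∧ Set.EqOn f g (G.deleteEdges K.sym2).edgeFinset ∧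
      ∃ ρ : V → ℕ, Set.BijOn ρ K (Set.Iio #K) ∧ ∀ x ∈ K, ∀ y ∈ K, ρ x < ρ y →
        vertexSum G f x + #K ≤ vertexSum G f y + 2 := by
  obtain ⟨ρ, hρ⟩ := exists_isRanking K (vertexSum (G.deleteEdges K.sym2) g)
  obtain ⟨c, hc, c_lt⟩ := exists_bijOn_Ioc_of_vertex_rank (G.edgeFinset ∩ K.sym2) ρ
    #(G.deleteEdges K.sym2).edgeFinset
  obtain ⟨f, hf, f_eq_g, f_eq_c⟩ := exists_isEdgeLabelling_deleteEdges_extension hg hc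
  refine ⟨f, hf, f_eq_g, ρ, hρ.bijOn, fun x hx y hy hxy => ?_⟩
  have mem_edges : ∀ a ∈ K, ∀ b ∈ K, b ≠ a → s(a, b) ∈ G.edgeFinset ∩ K.sym2 :=
    fun a ha b hb hba =>
      mem_inter.2 ⟨by simpa using hK ha hb hba.symm, mk_mem_sym2_iff.2 ⟨ha, hb⟩⟩
  refine vertexSum_add_card_le hK hx hy (by rintro rfl; exact hxy.false) ?_ ?_
  · rw [vertexSum_congr f_eq_g, vertexSum_congr f_eq_g]
    exact hρ.le_of_lt x hx y hy hxy
  · intro w hw hwx hwy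
    have hxw := mem_edges x hx w hw hwx
    have hyw := mem_edges y hy w hw hwy
    rw [f_eq_c hxw, f_eq_c hyw]
    exact c_lt x y w hxw hyw hxy

theorem mul_card_compl_lt_card_edgeFinset_deleteEdges_add (hK : G.IsClique ↑K) {t : ℕ}
    (hm : (t : ℤ) * ((Fintype.card V : ℤ) - #K) - (t - 1) + #K * (#K - 1) / 2
      ≤ (#G.edgeFinset : ℤ)) :
    t * #Kᶜ < #(G.deleteEdges K.sym2).edgeFinset + t := by
  have card_H : #(G.deleteEdges K.sym2).edgeFinset + (#K).choose 2 = #G.edgeFinset := by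
    rw [SimpleGraph.edgeFinset_deleteEdges, ← card_edgeFinset_inter_sym2 hK,
      card_sdiff_add_card_inter]
  have choose_eq : ((#K : ℤ) * (#K - 1) / 2) = (#K).choose 2 := by
    rw [Nat.choose_two_right]
    rcases Nat.eq_zero_or_pos #K with h | h
    · simp [h]
    · push_cast [h]
      rfl
  have compl_eq : (Fintype.card V : ℤ) - #K = #Kᶜ := by
    rw [card_compl, Nat.cast_sub (card_le_univ K)]
  rw [choose_eq, compl_eq, ← card_H] at hm
  push_cast at hm
  zify
  linarith

end Clique

theorem exists_labelling_with_gaps_general {V : Type*} [Fintype V]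
    (G : SimpleGraph V) [DecidableRel G.Adj] (K : Finset V) (t : ℕ) (ht : 0 < t)
    (hclique : G.IsClique ↑K) (hdom : ∀ v ∉ K, ∃ u ∈ K, G.Adj v u)
    (hm : (t : ℤ) * ((Fintype.card V : ℤ) - #K) - (t - 1) + #K * (#K - 1) / 2
      ≤ (#G.edgeFinset : ℤ)) :
    ∃ f : Sym2 V → ℕ, IsEdgeLabelling G f ∧
      (∀ v ∉ K, ∀ v' ∉ K, v ≠ v' →
        (t : ℤ) ≤ |(vertexSum G f v : ℤ) - (vertexSum G f v' : ℤ)|) ∧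
      ∃ u : Fin #K → V, Function.Injective u ∧ (∀ i, u i ∈ K) ∧
        ∀ i : ℕ, (hi : i + 1 < #K) →
          (#K : ℤ) - 2 ≤ (vertexSum G f (u ⟨i + 1, hi⟩) : ℤ)
            - (vertexSum G f (u ⟨i, Nat.lt_of_succ_lt hi⟩) : ℤ) := by
  classical
  have hdom' : ∀ v ∈ Kᶜ, ∃ u ∉ Kᶜ, (G.deleteEdges K.sym2).Adj v u := by
    simpa +contextual [and_comm] using hdom
  obtain ⟨g, hg, g_gap⟩ := exists_isEdgeLabelling_pairwise_le_abs_sub ht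
    (mul_card_compl_lt_card_edgeFinset_deleteEdges_add hclique hm) hdom'
  obtain ⟨f, hf, f_eq_g, ρ, hρ, f_gap⟩ := exists_isEdgeLabelling_extending_of_isClique hclique hg
  obtain ⟨u, u_inj, u_mem, ρ_u⟩ := exists_injective_fin_of_bijOn_Iio hρ
  refine ⟨f, hf, fun v hv v' hv' hne => ?_, u, u_inj, u_mem, fun i hi => ?_⟩
  · simpa only [← vertexSum_congr f_eq_g, vertexSum_deleteEdges_of_notMem, hv, hv',
      not_false_eq_true] using g_gap (by simpa using hv) (by simpa using hv') hne
  · have := f_gap _ (u_mem ⟨i, Nat.lt_of_succ_lt hi⟩) _ (u_mem ⟨i + 1, hi⟩) (by simp [ρ_u])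
    omega

/-- Let `G` be a graph with `n` vertices and `m` edges having a dominating clique `K` of
order `k ≥ 3`, with `m ≥ 3(n - k) - 2 + k(k-1)/2`. Then there is a bijective edge
labelling `f : E → {1, …, m}` such that:
(i) the vertex sums of any two distinct vertices outside `K` differ by at least `3`, and
(ii) there is an ordering `u_1, …, u_k` of the vertices of `K` with
`σ(u_{i+1}) - σ(u_i) ≥ k - 2` for all `1 ≤ i ≤ k - 1`. -/
theorem exists_labelling_with_gaps {V : Type*} [Fintype V] [DecidableEq V]
    (G : SimpleGraph V) [DecidableRel G.Adj] (K : Finset V)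
    (hclique : G.IsClique ↑K) (hcard : 3 ≤ K.card)
    (hdom : ∀ v ∉ K, ∃ u ∈ K, G.Adj v u)
    (hm : 3 * ((Fintype.card V : ℤ) - K.card) - 2 + K.card * (K.card - 1) / 2
        ≤ (G.edgeFinset.card : ℤ)) :
    ∃ f : Sym2 V → ℕ,
      Set.BijOn f ↑G.edgeFinset ↑(Finset.Icc 1 G.edgeFinset.card) ∧
      (∀ v ∉ K, ∀ v' ∉ K, v ≠ v' →
        (3 : ℤ) ≤ |((∑ w ∈ G.neighborFinset v, f s(v, w) : ℕ) : ℤ)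
          - ((∑ w ∈ G.neighborFinset v', f s(v', w) : ℕ) : ℤ)|) ∧
      (∃ u : Fin K.card → V, Function.Injective u ∧ (∀ i, u i ∈ K) ∧
        ∀ i : ℕ, (hi : i + 1 < K.card) →
          (K.card : ℤ) - 2 ≤
            ((∑ w ∈ G.neighborFinset (u ⟨i + 1, hi⟩), f s(u ⟨i + 1, hi⟩, w) : ℕ) : ℤ)
            - ((∑ w ∈ G.neighborFinset (u ⟨i, Nat.lt_of_succ_lt hi⟩),
                f s(u ⟨i, Nat.lt_of_succ_lt hi⟩, w) : ℕ) : ℤ)) := by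
  exact exists_labelling_with_gaps_general G K 3 three_pos hclique hdom hm
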